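/- arXiv:1705.08445 — 7 statements merged into one kernel-verified Lean document; each statement's English description precedes it below -/
import Mathlib

section
/- The empirical overlap matrix F̄ is irreducible if and only if for every nonempty proper subset A of {1,…,L}, the set ∪_{i∈A}{x : ψ_i(x) > 0} contains at least one sample point X^j_t with index j ∉ A. -/
/-!
The entry `F̄ j i` is a positive multiple of a sum of nonnegative terms `ψ_i*(X^j_t)`, so it is
positive exactly when one of them is, that is, when some sample from the `j`-th biased distribution
satisfies `ψ_i(X^j_t) > 0` (`empiricalOverlapMatrix_pos_iff`). Substituting this into the definition
of irreducibility and exchanging existential quantifiers gives the theorem.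
-/

open MeasureTheory Finset

/-- The empirical overlap matrix `F̄ i j = (1/N_i) ∑_{t=1}^{N_i} ψ_j*(X^i_t)`, where
`ψ_j*(x) = ψ_j(x) / ∑_k ψ_k(x)`. -/
noncomputable def empiricalOverlapMatrix {Ω : Type*} {L : ℕ} (ψ : Fin L → Ω → ℝ)
    (N : Fin L → ℕ) (X : (i : Fin L) → Fin (N i) → Ω) (i j : Fin L) : ℝ :=
  (1 / (N i : ℝ)) * ∑ t, ψ j (X i t) / ∑ k, ψ k (X i t)

/-- A nonnegative matrix `M` is irreducible iff for every nonempty proper subset `A` of the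
indices there are `i ∈ A` and `j ∉ A` with `M j i > 0`. -/
def MatIrreducible {L : ℕ} (M : Fin L → Fin L → ℝ) : Prop :=
  ∀ A : Finset (Fin L), A.Nonempty → A ≠ Finset.univ → ∃ i ∈ A, ∃ j ∉ A, 0 < M j i

theorem empiricalOverlapMatrix_pos_iff
    {Ω : Type*} {L : ℕ} (ψ : Fin L → Ω → ℝ)
    (hnonneg : ∀ i x, 0 ≤ ψ i x)
    (hsum : ∀ x, 0 < ∑ k, ψ k x)
    (N : Fin L → ℕ) (hN : ∀ i, 1 ≤ N i)
    (X : (i : Fin L) → Fin (N i) → Ω) (j i : Fin L) :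
    0 < empiricalOverlapMatrix ψ N X j i ↔ ∃ t : Fin (N j), 0 < ψ i (X j t) := by
  have hNpos : (0 : ℝ) < 1 / (N j : ℝ) := by
    have : (0 : ℝ) < N j := by exact_mod_cast hN j
    positivity
  unfold empiricalOverlapMatrix
  rw [mul_pos_iff_of_pos_left hNpos,
    Finset.sum_pos_iff_of_nonneg fun t _ => div_nonneg (hnonneg i _) (hsum _).le]
  simp only [Finset.mem_univ, true_and, div_pos_iff_of_pos_right (hsum _)]

/-- the empirical overlap matrix `F̄` is irreducible if and only if for every
nonempty proper subset `A` of `{1,…,L}` the set `⋃_{i∈A} {x : ψ_i(x) > 0}` contains at least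
one sample point `X^j_t` with `j ∉ A`. -/
theorem empiricalOverlapMatrix_irreducible_iff
    {Ω : Type*} [MeasurableSpace Ω] {L : ℕ} (ψ : Fin L → Ω → ℝ)
    (hnonneg : ∀ i x, 0 ≤ ψ i x)
    (hsum : ∀ x, 0 < ∑ k, ψ k x)
    (N : Fin L → ℕ) (hN : ∀ i, 1 ≤ N i)
    (X : (i : Fin L) → Fin (N i) → Ω) :
    MatIrreducible (empiricalOverlapMatrix ψ N X) ↔
      ∀ A : Finset (Fin L), A.Nonempty → A ≠ Finset.univ →
        ∃ j ∉ A, ∃ t : Fin (N j), X j t ∈ ⋃ i ∈ A, {x | 0 < ψ i x} := by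
  simp only [MatIrreducible, empiricalOverlapMatrix_pos_iff ψ hnonneg hsum N hN X,
    Set.mem_iUnion, Set.mem_ofPred_eq, exists_prop]
  refine forall_congr' fun A => imp_congr_right fun _ => imp_congr_right fun _ => ?_
  constructor
  · rintro ⟨i, hi, j, hj, t, ht⟩
    exact ⟨j, hj, t, i, hi, ht⟩
  · rintro ⟨j, hj, t, i, hi, ht⟩
    exact ⟨i, hi, j, hj, t, ht⟩
end

section
/- The overlap matrix F is stochastic (its entries are nonnegative and each row sums to one), the weight vector z is a probability vector, and F is reversible with respect to z, i.e. z_i F_{ij} = z_j F_{ji} for all i,j; consequently z^⊤ F = z^⊤, so z is a stationary distribution of F. -/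
/-! With `S = ∑ k, ψ k`, the integral `π[ψ_i ψ_j / S]` is symmetric in `i, j` and equals
`Ψ z_i F_{ij}`, which is reversibility. Each integrand lies between `0` and `ψ i`, hence is
integrable, and summing over `j` gives `π[ψ_i]`, so the rows of `F` sum to one. Stationarity
follows from reversibility by summing over `i`. -/

open MeasureTheory Finset

/-- The overlap matrix `F i j = π_i[ψ_j*]`, where `π_i(dx) = ψ_i(x) π(dx) / π[ψ_i]` and
`ψ_j*(x) = ψ_j(x) / ∑_k ψ_k(x)`. -/
noncomputable def overlapMatrix {Ω : Type*} [MeasurableSpace Ω] (π : Measure Ω) {L : ℕ}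
    (ψ : Fin L → Ω → ℝ) (i j : Fin L) : ℝ :=
  (∫ x, ψ i x * (ψ j x / ∑ k, ψ k x) ∂π) / (∫ x, ψ i x ∂π)

/-- The weight vector `z i = π[ψ_i] / Ψ` with `Ψ = ∑_k π[ψ_k]`. -/
noncomputable def weightVector {Ω : Type*} [MeasurableSpace Ω] (π : Measure Ω) {L : ℕ}
    (ψ : Fin L → Ω → ℝ) (i : Fin L) : ℝ :=
  (∫ x, ψ i x ∂π) / ∑ k, ∫ x, ψ k x ∂π

lemma integrable_mul_div_sum {Ω : Type*} [MeasurableSpace Ω] {π : Measure Ω}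
    {L : ℕ} {ψ : Fin L → Ω → ℝ}
    (hmeas : ∀ i, Measurable (ψ i)) (hnonneg : ∀ i x, 0 ≤ ψ i x)
    (hint : ∀ i, Integrable (ψ i) π) (i j : Fin L) :
    Integrable (fun x => ψ i x * (ψ j x / ∑ k, ψ k x)) π := by
  refine (hint i).mono' ?_ (Filter.Eventually.of_forall fun x => ?_)
  · exact ((hmeas i).mul ((hmeas j).div
      (Finset.measurable_fun_sum _ fun k _ => hmeas k))).aestronglyMeasurable
  · have hS : 0 ≤ ∑ k, ψ k x := Finset.sum_nonneg fun k _ => hnonneg k x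
    have hj : ψ j x ≤ ∑ k, ψ k x :=
      Finset.single_le_sum (f := fun k => ψ k x) (fun k _ => hnonneg k x) (Finset.mem_univ j)
    rw [Real.norm_of_nonneg (mul_nonneg (hnonneg i x) (div_nonneg (hnonneg j x) hS))]
    exact mul_le_of_le_one_right (hnonneg i x) (div_le_one_of_le₀ hj hS)

lemma sum_integral_mul_div_sum {Ω : Type*} [MeasurableSpace Ω] {π : Measure Ω}
    {L : ℕ} {ψ : Fin L → Ω → ℝ}
    (hmeas : ∀ i, Measurable (ψ i)) (hnonneg : ∀ i x, 0 ≤ ψ i x)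
    (hsum : ∀ x, 0 < ∑ k, ψ k x) (hint : ∀ i, Integrable (ψ i) π) (i : Fin L) :
    ∑ j, ∫ x, ψ i x * (ψ j x / ∑ k, ψ k x) ∂π = ∫ x, ψ i x ∂π := by
  rw [← integral_finsetSum _ fun j _ => integrable_mul_div_sum hmeas hnonneg hint i j]
  refine integral_congr_ae (Filter.Eventually.of_forall fun x => ?_)
  simp only
  rw [← Finset.mul_sum, ← Finset.sum_div, div_self (hsum x).ne', mul_one]

/-- the overlap matrix `F` is stochastic, the weight vector `z` is a probability
vector, `F` is reversible with respect to `z` (`z_i F_{ij} = z_j F_{ji}`), and consequently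
`zᵀ F = zᵀ`, i.e. `z` is a stationary distribution of `F`. -/
theorem overlapMatrix_stochastic_and_reversible
    {Ω : Type*} [MeasurableSpace Ω] (π : Measure Ω) [IsProbabilityMeasure π]
    {L : ℕ} (ψ : Fin L → Ω → ℝ)
    (hmeas : ∀ i, Measurable (ψ i))
    (hnonneg : ∀ i x, 0 ≤ ψ i x)
    (hsum : ∀ x, 0 < ∑ k, ψ k x)
    (hint : ∀ i, Integrable (ψ i) π)
    (hpos : ∀ i, 0 < ∫ x, ψ i x ∂π) :
    (∀ i j, 0 ≤ overlapMatrix π ψ i j) ∧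
    (∀ i, ∑ j, overlapMatrix π ψ i j = 1) ∧
    (∀ i, 0 ≤ weightVector π ψ i) ∧
    (∑ i, weightVector π ψ i = 1) ∧
    (∀ i j, weightVector π ψ i * overlapMatrix π ψ i j
      = weightVector π ψ j * overlapMatrix π ψ j i) ∧
    (∀ j, ∑ i, weightVector π ψ i * overlapMatrix π ψ i j = weightVector π ψ j) := by
  have hrow : ∀ i, ∑ j, overlapMatrix π ψ i j = 1 := fun i => by
    simp only [overlapMatrix]
    rw [← Finset.sum_div, sum_integral_mul_div_sum hmeas hnonneg hsum hint,
      div_self (hpos i).ne']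
  have hrev : ∀ i j, weightVector π ψ i * overlapMatrix π ψ i j
      = weightVector π ψ j * overlapMatrix π ψ j i := fun i j => by
    have hsymm : ∫ x, ψ i x * (ψ j x / ∑ k, ψ k x) ∂π
        = ∫ x, ψ j x * (ψ i x / ∑ k, ψ k x) ∂π := by
      congr 1
      ext x
      ring
    simp only [overlapMatrix, weightVector]
    rw [hsymm, div_mul_div_comm, div_mul_div_comm, mul_comm (∑ k, _), mul_comm (∑ k, _),
      mul_div_mul_left _ _ (hpos i).ne', mul_div_mul_left _ _ (hpos j).ne']
  refine ⟨fun i j => ?_, hrow, fun i => ?_, ?_, hrev, fun j => ?_⟩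
  · exact div_nonneg (integral_nonneg fun x =>
      mul_nonneg (hnonneg i x) (div_nonneg (hnonneg j x) (hsum x).le)) (hpos i).le
  · exact div_nonneg (hpos i).le (Finset.sum_nonneg fun k _ => (hpos k).le)
  -- A probability space is nonempty, so `hsum` at a point excludes `L = 0`.
  · obtain ⟨x⟩ := nonempty_of_isProbabilityMeasure π
    have hne : (Finset.univ : Finset (Fin L)).Nonempty :=
      Finset.nonempty_of_sum_ne_zero (hsum x).ne'
    simp only [weightVector]
    rw [← Finset.sum_div, div_self (Finset.sum_pos (fun k _ => hpos k) hne).ne']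
  · rw [Finset.sum_congr rfl fun i _ => hrev i j, ← Finset.mul_sum, hrow, mul_one]
end

section
/- For every π-integrable function g : Ω → ℝ, one has π[g] = Ψ · Σ_{i=1}^L z_i π_i[g*], the normalizing constant satisfies Ψ = 1/Σ_{i=1}^L z_i π_i[1*], and hence π[g] = (Σ_{i=1}^L z_i π_i[g*]) / (Σ_{i=1}^L z_i π_i[1*]), where 1 denotes the constant function equal to one. -/
/-! The functions `ψ_i / ∑_k ψ_k` form a measurable partition of unity with values in `[0, 1]`, so
`π[g] = ∑_i π[ψ_i g*]` for every integrable `g`; here boundedness of the weights is what makes each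
`ψ_i g*` integrable. Each term `z_i π_i[g*]` equals `π[ψ_i g*] / Ψ`, since `π[ψ_i]` cancels, and the
first identity follows. The case `g = 1` gives `1 = Ψ ∑_i z_i π_i[1*]`, and dividing the two
identities gives the ratio formula. -/

open MeasureTheory Finset

/-- The expectation of `g` under the biased distribution `π_i(dx) = ψ_i(x) π(dx) / π[ψ_i]`. -/
noncomputable def biasedMean {Ω : Type*} [MeasurableSpace Ω] (π : Measure Ω) {L : ℕ}
    (ψ : Fin L → Ω → ℝ) (i : Fin L) (g : Ω → ℝ) : ℝ :=
  (∫ x, ψ i x * g x ∂π) / (∫ x, ψ i x ∂π)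

/-- The partition-of-unity identity, rescaled by `Ψ`. -/
theorem integral_eq_total_mul_sum_weight_mul_biasedMean
    {Ω : Type*} [MeasurableSpace Ω] (π : Measure Ω)
    {L : ℕ} (ψ : Fin L → Ω → ℝ)
    (hmeas : ∀ i, Measurable (ψ i))
    (hnonneg : ∀ i x, 0 ≤ ψ i x)
    (hsum : ∀ x, 0 < ∑ k, ψ k x)
    (hpos : ∀ i, 0 < ∫ x, ψ i x ∂π)
    (hΨ : (∑ k, ∫ x, ψ k x ∂π) ≠ 0)
    (g : Ω → ℝ) (hg : Integrable g π) :
    (∫ x, g x ∂π) = (∑ k, ∫ x, ψ k x ∂π) *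
        ∑ i, weightVector π ψ i * biasedMean π ψ i (fun x => g x / ∑ k, ψ k x) := by
  have hsum_meas : Measurable fun x => ∑ k, ψ k x :=
    Finset.measurable_fun_sum _ fun i _ => hmeas i
  have hterm : ∀ i, Integrable (fun x => ψ i x * (g x / ∑ k, ψ k x)) π := by
    intro i
    have hb : Integrable (fun x => (ψ i x / ∑ k, ψ k x) * g x) π := by
      refine hg.bdd_mul (c := 1) ((hmeas i).div hsum_meas).aestronglyMeasurable
        (Filter.Eventually.of_forall fun x => ?_)
      rw [Real.norm_of_nonneg (div_nonneg (hnonneg i x) (hsum x).le), div_le_one (hsum x)]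
      exact Finset.single_le_sum (f := fun k => ψ k x) (fun k _ => hnonneg k x)
        (Finset.mem_univ i)
    exact hb.congr (Filter.Eventually.of_forall fun x => by ring)
  rw [Finset.mul_sum]
  calc (∫ x, g x ∂π) = ∫ x, ∑ i, ψ i x * (g x / ∑ k, ψ k x) ∂π := by
        congr 1 with x
        rw [← Finset.sum_mul, mul_div_cancel₀ _ (hsum x).ne']
    _ = ∑ i, ∫ x, ψ i x * (g x / ∑ k, ψ k x) ∂π :=
        integral_finsetSum _ fun i _ => hterm i
    _ = _ := by
        refine Finset.sum_congr rfl fun i _ => ?_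
        have hi := (hpos i).ne'
        unfold weightVector biasedMean
        field_simp

/-- for every `π`-integrable `g`, `π[g] = Ψ ∑_i z_i π_i[g*]`,
`Ψ = 1 / ∑_i z_i π_i[1*]`, and hence
`π[g] = (∑_i z_i π_i[g*]) / (∑_i z_i π_i[1*])`, where `g*(x) = g(x)/∑_k ψ_k(x)` and
`1` is the constant function one. -/
theorem emus_decomposition_of_average
    {Ω : Type*} [MeasurableSpace Ω] (π : Measure Ω) [IsProbabilityMeasure π]
    {L : ℕ} (ψ : Fin L → Ω → ℝ)
    (hmeas : ∀ i, Measurable (ψ i))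
    (hnonneg : ∀ i x, 0 ≤ ψ i x)
    (hsum : ∀ x, 0 < ∑ k, ψ k x)
    (hint : ∀ i, Integrable (ψ i) π)
    (hpos : ∀ i, 0 < ∫ x, ψ i x ∂π)
    (g : Ω → ℝ) (hg : Integrable g π) :
    (∫ x, g x ∂π) = (∑ k, ∫ x, ψ k x ∂π) *
        ∑ i, weightVector π ψ i * biasedMean π ψ i (fun x => g x / ∑ k, ψ k x) ∧
    (∑ k, ∫ x, ψ k x ∂π) =
        1 / ∑ i, weightVector π ψ i * biasedMean π ψ i (fun x => 1 / ∑ k, ψ k x) ∧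
    (∫ x, g x ∂π) =
        (∑ i, weightVector π ψ i * biasedMean π ψ i (fun x => g x / ∑ k, ψ k x)) /
        (∑ i, weightVector π ψ i * biasedMean π ψ i (fun x => 1 / ∑ k, ψ k x)) := by
  have hΨ : (∑ k, ∫ x, ψ k x ∂π) ≠ 0 := by
    -- `L = 0` is excluded: `Ω` is nonempty, and an empty sum cannot be positive.
    obtain ⟨x⟩ : Nonempty Ω := nonempty_of_isProbabilityMeasure π
    have hne : (Finset.univ : Finset (Fin L)).Nonempty :=
      Finset.nonempty_of_sum_ne_zero (hsum x).ne'
    exact (Finset.sum_pos (fun i _ => hpos i) hne).ne'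
  have key := integral_eq_total_mul_sum_weight_mul_biasedMean π ψ hmeas hnonneg hsum hpos hΨ
  have hg_eq := key g hg
  have hone := key (fun _ => 1) (integrable_const 1)
  rw [integral_const, probReal_univ, one_smul] at hone
  have htotal := eq_one_div_of_mul_eq_one_left hone.symm
  refine ⟨hg_eq, htotal, ?_⟩
  rw [hg_eq, htotal]
  ring
end

section
/- Under Assumption 4.1, there exist constants M₁, θ₊, θ₋ > 0 depending on V but not on M such that for all M ≥ M₁: setting K = M·⌈max_{0≤x≤M} |V'(x)|⌉ and h = M/K, the quantities F_{K,K−1} := (1/2)·(∫_{M−h}^M e^{−V(x)} dx)/(∫_{M−h}^∞ e^{−V(x)} dx) and F_{K,K+1} := (1/2)·(∫_M^∞ e^{−V(x)} dx)/(∫_{M−h}^∞ e^{−V(x)} dx) satisfy F_{K,K−1} ≥ θ₋ > 0 and F_{K,K+1} ≥ θ₊ > 0. -/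
/-!
Write `L = ⌈max_{[0,M]} |V'|⌉`, `h = 1 / L`, `m = V' M`, `E = exp (-V M)`. The two integrals
`N₋ = ∫_{M-h}^M exp (-V)` and `N₊ = ∫_M^∞ exp (-V)` are both comparable to `h * E`, with constants
independent of `M`, and each entry is `1 / 2` times the share of one of them in `N₋ + N₊`.

* On `[M - h, M]` convexity gives `0 ≤ V' ≤ m ≤ L`, so `V` varies by at most `L * h = 1` there and
  `h * E ≤ N₋ ≤ e * h * E`.
* `-exp (-V) / V'` has derivative `exp (-V) * (1 + V'' / V' ^ 2)`, and `0 ≤ V'' / V' ^ 2 ≤ α`.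
  Integrating over `(M, ∞)` gives `N₊ ≤ E / m ≤ (1 + α) * N₊` (`tail_bounds`).
* `m ≤ L`, and conversely `L ≤ C * m`, because on `[0, M₀]` the function `|V'|` is bounded while
  `V'` is bounded below by `V' M₀ > 0` on `[M₀, ∞)` (`ceil_sup_bounds`).
-/

open MeasureTheory

/-- `exp (-V)` has tail mass `exp (-V M) / V' M` up to the factor `1 + α`. -/
lemma tail_bounds (M : ℝ) (V V' V'' : ℝ → ℝ) (α : ℝ)
    (hint : IntegrableOn (fun x => Real.exp (-V x)) (Set.Ioi M) volume)
    (hd1 : ∀ x ∈ Set.Ici M, HasDerivAt V (V' x) x)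
    (hd2 : ∀ x ∈ Set.Ici M, HasDerivAt V' (V'' x) x)
    (hconv : ∀ x ∈ Set.Ici M, 0 ≤ V'' x)
    (hmono : ∀ x ∈ Set.Ici M, V' M ≤ V' x)
    (hm : 0 < V' M)
    (herg : ∀ x ∈ Set.Ici M, V'' x ≤ α * V' x ^ 2) :
    (∫ x in Set.Ioi M, Real.exp (-V x)) ≤ Real.exp (-V M) / V' M ∧
    Real.exp (-V M) / V' M ≤ (1 + α) * ∫ x in Set.Ioi M, Real.exp (-V x) := by
  have hpos : ∀ x ∈ Set.Ici M, 0 < V' x := fun x hx => hm.trans_le (hmono x hx)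
  have hgrow : ∀ x ∈ Set.Ici M, V' M * (x - M) ≤ V x - V M := by
    intro x hx
    refine (convex_Ici M).mul_sub_le_image_sub_of_le_deriv
      (fun y hy => (hd1 y hy).continuousAt.continuousWithinAt)
      (fun y hy => (hd1 y (interior_subset hy)).differentiableAt.differentiableWithinAt)
      (fun y hy => ?_) M Set.self_mem_Ici x hx hx
    rw [(hd1 y (interior_subset hy)).deriv]
    exact hmono y (interior_subset hy)
  have hVtop : Filter.Tendsto V Filter.atTop Filter.atTop := by
    have h1 : Filter.Tendsto (fun x : ℝ => V' M * (x - M) + V M) Filter.atTop Filter.atTop :=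
      Filter.tendsto_atTop_add_const_right _ _
        ((Filter.tendsto_atTop_add_const_right _ (-M) Filter.tendsto_id).const_mul_atTop hm)
    refine Filter.tendsto_atTop_mono' _ ?_ h1
    filter_upwards [Filter.eventually_ge_atTop M] with x hx
    linarith [hgrow x hx]
  have hE : Filter.Tendsto (fun x => Real.exp (-V x)) Filter.atTop (nhds 0) :=
    Real.tendsto_exp_atBot.comp (Filter.tendsto_neg_atTop_atBot.comp hVtop)
  have hlim : Filter.Tendsto (fun x => -(Real.exp (-V x) / V' x)) Filter.atTop (nhds 0) := by
    have h0 : Filter.Tendsto (fun x => Real.exp (-V x) / V' M) Filter.atTop (nhds 0) := by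
      simpa using hE.div_const (V' M)
    have h1 : Filter.Tendsto (fun x => Real.exp (-V x) / V' x) Filter.atTop (nhds 0) := by
      refine squeeze_zero' ?_ ?_ h0
      · filter_upwards [Filter.eventually_ge_atTop M] with x hx
        exact div_nonneg (Real.exp_nonneg _) (hpos x hx).le
      · filter_upwards [Filter.eventually_ge_atTop M] with x hx
        exact div_le_div_of_nonneg_left (Real.exp_nonneg _) hm (hmono x hx)
    simpa using h1.neg
  have hder : ∀ x ∈ Set.Ici M, HasDerivAt (fun x => -(Real.exp (-V x) / V' x))
      (Real.exp (-V x) * (1 + V'' x / V' x ^ 2)) x := by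
    intro x hx
    have hne := (hpos x hx).ne'
    have hexp : HasDerivAt (fun x => Real.exp (-V x)) (Real.exp (-V x) * -V' x) x :=
      (hd1 x hx).neg.exp
    refine (hexp.div (hd2 x hx) hne).neg.congr_deriv ?_
    field_simp
    ring
  have hratio0 : ∀ x ∈ Set.Ici M, 0 ≤ V'' x / V' x ^ 2 := fun x hx =>
    div_nonneg (hconv x hx) (sq_nonneg _)
  have hratio1 : ∀ x ∈ Set.Ici M, V'' x / V' x ^ 2 ≤ α := fun x hx => by
    rw [div_le_iff₀ (pow_pos (hpos x hx) 2)]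
    exact herg x hx
  have hnn : ∀ x ∈ Set.Ioi M, 0 ≤ Real.exp (-V x) * (1 + V'' x / V' x ^ 2) := fun x hx =>
    mul_nonneg (Real.exp_nonneg _) (by linarith [hratio0 x (Set.Ioi_subset_Ici_self hx)])
  have hI := integrableOn_Ioi_deriv_of_nonneg' hder hnn hlim
  have hval := integral_Ioi_of_hasDerivAt_of_nonneg' hder hnn hlim
  rw [show Real.exp (-V M) / V' M
    = ∫ x in Set.Ioi M, Real.exp (-V x) * (1 + V'' x / V' x ^ 2) by rw [hval]; ring]
  constructor
  · refine setIntegral_mono_on hint hI measurableSet_Ioi fun x hx => ?_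
    have := hratio0 x (Set.Ioi_subset_Ici_self hx)
    nlinarith [Real.exp_pos (-V x)]
  · rw [← integral_const_mul]
    refine setIntegral_mono_on hI (hint.const_mul _) measurableSet_Ioi fun x hx => ?_
    have := hratio1 x (Set.Ioi_subset_Ici_self hx)
    nlinarith [Real.exp_pos (-V x)]

/-- If `V'` is bounded by `S₀` in absolute value on `[0, M₀]` and positive and increasing
afterwards, then `⌈max_{[0,M]} |V'|⌉` lies between `V' M` and `S₀ + V' M + 1`. -/
lemma ceil_sup_bounds (M₀ M S₀ : ℝ) (V' : ℝ → ℝ) (hM₀ : 0 ≤ M₀) (hM : M₀ ≤ M)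
    (hS₀ : ∀ x ∈ Set.Icc 0 M₀, |V' x| ≤ S₀)
    (hmono : MonotoneOn V' (Set.Ici M₀))
    (hpos : ∀ x ∈ Set.Ici M₀, 0 < V' x) :
    V' M ≤ (⌈sSup ((fun x => |V' x|) '' Set.Icc (0 : ℝ) M)⌉ : ℝ) ∧
    (⌈sSup ((fun x => |V' x|) '' Set.Icc (0 : ℝ) M)⌉ : ℝ) ≤ S₀ + V' M + 1 := by
  have hS₀nn : 0 ≤ S₀ := (abs_nonneg _).trans (hS₀ 0 ⟨le_rfl, hM₀⟩)
  have hub : ∀ y ∈ (fun x => |V' x|) '' Set.Icc (0 : ℝ) M, y ≤ S₀ + V' M := by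
    rintro _ ⟨x, hx, rfl⟩
    have hmM := hpos M hM
    rcases le_total x M₀ with h | h
    · have := hS₀ x ⟨hx.1, h⟩
      dsimp only
      linarith
    · have := hmono h hM hx.2
      dsimp only
      rw [abs_of_pos (hpos x h)]
      linarith
  constructor
  · refine le_trans ?_ (Int.le_ceil _)
    exact (le_abs_self _).trans
      (le_csSup ⟨_, hub⟩ ⟨M, ⟨hM₀.trans hM, le_rfl⟩, rfl⟩)
  · refine (Int.ceil_lt_add_one _).le.trans ?_
    have := csSup_le ((Set.nonempty_Icc.mpr (hM₀.trans hM)).image _) hub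
    linarith

/-- under Assumption 4.1 (`π = e^{−V}` a probability density on `[0,∞)`, `V`
C¹ on `[0,∞)` and C² on `[M₀,∞)` with `V'' ≥ 0`, `V' > 0`, and `αV'² − V'' ≥ c > 0` there),
there exist `M₁, θ₊, θ₋ > 0` depending on `V` but not on `M` such that for all `M ≥ M₁`,
with `K = M·⌈max_{0≤x≤M}|V'(x)|⌉` and `h = M/K`, the overlap entries
`F_{K,K−1} = (1/2)(∫_{M−h}^M e^{−V})/(∫_{M−h}^∞ e^{−V})` and
`F_{K,K+1} = (1/2)(∫_M^∞ e^{−V})/(∫_{M−h}^∞ e^{−V})` satisfy `F_{K,K−1} ≥ θ₋` and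
`F_{K,K+1} ≥ θ₊`. -/
theorem overlap_entries_bounded_below_small_prob
    (M₀ : ℝ) (hM₀ : 0 ≤ M₀) (V V' V'' : ℝ → ℝ) (α c : ℝ)
    (hα0 : 0 < α) (hα1 : α < 1) (hc : 0 < c)
    (hprob : (∫ x in Set.Ioi (0 : ℝ), Real.exp (-V x)) = 1)
    (hint : IntegrableOn (fun x => Real.exp (-V x)) (Set.Ioi (0 : ℝ)) volume)
    (hd1 : ∀ x ∈ Set.Ici (0 : ℝ), HasDerivAt V (V' x) x)
    (hc1 : ContinuousOn V' (Set.Ici (0 : ℝ)))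
    (hd2 : ∀ x ∈ Set.Ici M₀, HasDerivAt V' (V'' x) x)
    (hc2 : ContinuousOn V'' (Set.Ici M₀))
    (hconv : ∀ x ∈ Set.Ici M₀, 0 ≤ V'' x)
    (hVpos : ∀ x ∈ Set.Ici M₀, 0 < V' x)
    (herg : ∀ x ∈ Set.Ici M₀, c ≤ α * V' x ^ 2 - V'' x) :
    ∃ M₁ > 0, ∃ θp > 0, ∃ θm > 0, ∀ M ≥ M₁,
      let K : ℝ := M * (⌈sSup ((fun x => |V' x|) '' Set.Icc (0 : ℝ) M)⌉ : ℝ)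
      let h : ℝ := M / K
      θm ≤ (1 / 2) * (∫ x in Set.Ioc (M - h) M, Real.exp (-V x)) /
            (∫ x in Set.Ioi (M - h), Real.exp (-V x)) ∧
      θp ≤ (1 / 2) * (∫ x in Set.Ioi M, Real.exp (-V x)) /
            (∫ x in Set.Ioi (M - h), Real.exp (-V x)) := by
  have hsub : Set.Ici M₀ ⊆ Set.Ici (0 : ℝ) := Set.Ici_subset_Ici.mpr hM₀
  have hmono : MonotoneOn V' (Set.Ici M₀) := by
    refine monotoneOn_of_deriv_nonneg (convex_Ici M₀)
      (fun y hy => (hd2 y hy).continuousAt.continuousWithinAt)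
      (fun y hy => (hd2 y (interior_subset hy)).differentiableAt.differentiableWithinAt)
      (fun y hy => ?_)
    rw [(hd2 y (interior_subset hy)).deriv]
    exact hconv y (interior_subset hy)
  obtain ⟨S₀, hS₀⟩ : ∃ S₀, ∀ x ∈ Set.Icc 0 M₀, |V' x| ≤ S₀ :=
    isCompact_Icc.exists_bound_of_continuousOn (hc1.mono Set.Icc_subset_Ici_self)
  have hS₀nn : 0 ≤ S₀ := (abs_nonneg _).trans (hS₀ 0 ⟨le_rfl, hM₀⟩)
  have hm₀ : 0 < V' M₀ := hVpos M₀ Set.self_mem_Ici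
  -- `C` is chosen so that `S₀ + m + 1 ≤ C * m` for every `m ≥ V' M₀`.
  set C : ℝ := (S₀ + 1) / V' M₀ + 1 with hC
  have hCpos : 0 < C := by positivity
  refine ⟨M₀ + 1, by linarith, 1 / (2 * (1 + Real.exp 1 * (1 + α))), by positivity,
    1 / (2 * (1 + C)), by positivity, fun M hM => ?_⟩
  intro K h
  have hMM₀ : M₀ ≤ M := by linarith
  have hMpos : 0 < M := by linarith
  have hm : 0 < V' M := hVpos M hMM₀
  obtain ⟨hL1, hL2⟩ := ceil_sup_bounds M₀ M S₀ V' hM₀ hMM₀ hS₀ hmono hVpos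
  have hLone : (1 : ℝ) ≤ (⌈sSup ((fun x => |V' x|) '' Set.Icc (0 : ℝ) M)⌉ : ℝ) := by
    have : (0 : ℝ) < (⌈sSup ((fun x => |V' x|) '' Set.Icc (0 : ℝ) M)⌉ : ℝ) := hm.trans_le hL1
    exact_mod_cast this
  have hh : h = 1 / (⌈sSup ((fun x => |V' x|) '' Set.Icc (0 : ℝ) M)⌉ : ℝ) := by
    simp only [h, K]
    field_simp
  clear_value h
  generalize (⌈sSup ((fun x => |V' x|) '' Set.Icc (0 : ℝ) M)⌉ : ℝ) = L at *
  have hLpos : 0 < L := by linarith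
  have hhpos : 0 < h := by rw [hh]; positivity
  have hLh : L * h = 1 := by rw [hh]; field_simp
  have hh1 : h ≤ 1 := by nlinarith
  have hLC : L ≤ C * V' M := by
    have h1 : V' M₀ ≤ V' M := hmono Set.self_mem_Ici hMM₀ hMM₀
    have h2 : S₀ + 1 ≤ (S₀ + 1) / V' M₀ * V' M := by
      rw [div_mul_eq_mul_div, le_div_iff₀ hm₀]
      gcongr
    rw [hC]
    linarith
  have hIcc : ∀ x ∈ Set.Icc (M - h) M, M₀ ≤ x := fun x hx => by linarith [hx.1]
  have hup : ∀ x ∈ Set.Icc (M - h) M, V M - V x ≤ L * (M - x) := by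
    intro x hx
    refine (convex_Icc (M - h) M).image_sub_le_mul_sub_of_deriv_le
      (fun y hy => (hd1 y (hsub (hIcc y hy))).continuousAt.continuousWithinAt)
      (fun y hy => (hd1 y (hsub (hIcc y (interior_subset hy)))).differentiableAt.differentiableWithinAt)
      (fun y hy => ?_) x hx M ⟨by linarith, le_rfl⟩ hx.2
    have hy' := interior_subset hy
    rw [(hd1 y (hsub (hIcc y hy'))).deriv]
    exact (hmono (hIcc y hy') hMM₀ hy'.2).trans hL1
  have hlow : ∀ x ∈ Set.Icc (M - h) M, V x ≤ V M := by
    intro x hx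
    have : MonotoneOn V (Set.Icc (M - h) M) := by
      refine monotoneOn_of_deriv_nonneg (convex_Icc _ _)
        (fun y hy => (hd1 y (hsub (hIcc y hy))).continuousAt.continuousWithinAt)
        (fun y hy => (hd1 y (hsub (hIcc y (interior_subset hy)))).differentiableAt.differentiableWithinAt)
        (fun y hy => ?_)
      rw [(hd1 y (hsub (hIcc y (interior_subset hy)))).deriv]
      exact (hVpos y (hIcc y (interior_subset hy))).le
    exact this hx ⟨by linarith, le_rfl⟩ hx.2
  have hintM : IntegrableOn (fun x => Real.exp (-V x)) (Set.Ioi M) volume :=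
    hint.mono_set (Set.Ioi_subset_Ioi hMpos.le)
  have hinth : IntegrableOn (fun x => Real.exp (-V x)) (Set.Ioc (M - h) M) volume :=
    hint.mono_set (fun x hx => lt_of_le_of_lt (by linarith) hx.1)
  obtain ⟨hT1, hT2⟩ := tail_bounds M V V' V'' α hintM
    (fun x hx => hd1 x (hMpos.le.trans hx)) (fun x hx => hd2 x (hMM₀.trans hx))
    (fun x hx => hconv x (hMM₀.trans hx))
    (fun x hx => hmono hMM₀ (hMM₀.trans hx) hx) hm
    (fun x hx => by linarith [herg x (hMM₀.trans hx)])
  have hvol : volume.real (Set.Ioc (M - h) M) = h := by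
    rw [Real.volume_real_Ioc_of_le (by linarith)]
    ring
  have hN1 : h * Real.exp (-V M) ≤ ∫ x in Set.Ioc (M - h) M, Real.exp (-V x) := by
    have := setIntegral_mono_on (μ := volume) (s := Set.Ioc (M - h) M)
      (f := fun _ => Real.exp (-V M)) (integrableOn_const (by simp)) hinth measurableSet_Ioc
      (fun x hx => Real.exp_le_exp.mpr (neg_le_neg (hlow x (Set.Ioc_subset_Icc_self hx))))
    simpa [hvol] using this
  have hN2 : (∫ x in Set.Ioc (M - h) M, Real.exp (-V x))
      ≤ h * (Real.exp 1 * Real.exp (-V M)) := by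
    have := setIntegral_mono_on (μ := volume) (s := Set.Ioc (M - h) M)
      (g := fun _ => Real.exp 1 * Real.exp (-V M)) hinth (integrableOn_const (by simp))
      measurableSet_Ioc (fun x hx => by
        have h1 := hup x (Set.Ioc_subset_Icc_self hx)
        have h2 : L * (M - x) ≤ L * h := by
          gcongr
          linarith [hx.1]
        rw [← Real.exp_add]
        exact Real.exp_le_exp.mpr (by linarith))
    simpa only [setIntegral_const, hvol, smul_eq_mul] using this
  have hsplit : (∫ x in Set.Ioi (M - h), Real.exp (-V x))
      = (∫ x in Set.Ioc (M - h) M, Real.exp (-V x)) + ∫ x in Set.Ioi M, Real.exp (-V x) := by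
    rw [← Set.Ioc_union_Ioi_eq_Ioi (show M - h ≤ M by linarith)]
    exact setIntegral_union (Set.Ioc_disjoint_Ioi le_rfl) measurableSet_Ioi hinth hintM
  have hE : 0 < Real.exp (-V M) := Real.exp_pos _
  have hEm1 : Real.exp (-V M) / V' M ≤ C * (h * Real.exp (-V M)) := by
    rw [div_le_iff₀ hm]
    have : 1 ≤ C * V' M * h := by rw [← hLh]; gcongr
    nlinarith
  have hEm2 : h * Real.exp (-V M) ≤ Real.exp (-V M) / V' M := by
    rw [le_div_iff₀ hm]
    have : h * V' M ≤ 1 := by rw [← hLh, mul_comm]; gcongr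
    nlinarith
  rw [hsplit]
  generalize (∫ x in Set.Ioc (M - h) M, Real.exp (-V x)) = A at *
  generalize (∫ x in Set.Ioi M, Real.exp (-V x)) = B at *
  have hA : 0 < A := lt_of_lt_of_le (by positivity) hN1
  have hB : 0 < B := by
    have : 0 < (1 + α) * B := lt_of_lt_of_le (by positivity) hT2
    exact pos_of_mul_pos_right this (by linarith)
  have hBA : B ≤ C * A := hT1.trans (hEm1.trans (by gcongr))
  have hAB : A ≤ Real.exp 1 * (1 + α) * B := by
    calc A ≤ Real.exp 1 * (h * Real.exp (-V M)) := by linarith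
      _ ≤ Real.exp 1 * ((1 + α) * B) :=
        mul_le_mul_of_nonneg_left (hEm2.trans hT2) (Real.exp_nonneg _)
      _ = _ := by ring
  constructor
  · rw [div_le_div_iff₀ (by positivity) (by positivity)]
    linarith
  · rw [div_le_div_iff₀ (by positivity) (by positivity)]
    linarith
end

section
/- Fix an integer K ≥ 2, data y₁,…,y_n ∈ ℝ, and positive constants α, g, h, κ, and m ∈ ℝ. Define the (unnormalized) posterior density of the hierarchical Gaussian mixture model by p(θ) = β^{Kα+g−1} (∏_{k=1}^K λ_k)^{α−1} exp{ −(κ/2) Σ_{k=1}^K (μ_k − m)² − β(h + Σ_{k=1}^K λ_k) } ∏_{i=1}^n ( Σ_{k=1}^K q_k λ_k^{1/2} exp{ −(λ_k/2)(y_i − μ_k)² } ), on the domain where λ₁,…,λ_K > 0, β > 0, μ₁,…,μ_K ∈ ℝ, q₁,…,q_K > 0 with Σ_k q_k = 1. If some data value y_j occurs among y₁,…,y_n with frequency N_j > 2g + 2(K−1)α, then p is unbounded on its domain. -/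
/-!
The density blows up along the curve on which component `0` collapses onto the repeated value:
`μ₀ = y_j`, `λ₀ = t`, `β = 1/t`, while every other component stays at mean `m` and precision `1`,
and all weights equal `1/K`. The choice `β = 1/t` keeps `β λ₀ = 1`, so the exponential prior factor
stays bounded below for `t ≥ 1`. Each observation equal to `y_j` contributes at least `t^{1/2}/K`
through component `0` (`likelihood_factor_lower`), each other one at least a positive constant
through component `1`. Hence `p ≥ A t^e` with `A > 0` and
`e = -(Kα+g-1) + (α-1) + N_j/2 = N_j/2 - g - (K-1)α > 0`, which tends to infinity with `t`.
-/

open MeasureTheory Finset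

/-- The (unnormalized) posterior density of the hierarchical Gaussian mixture model:
`p(θ) = β^{Kα+g−1} (∏_k λ_k)^{α−1}
  exp{−(κ/2)∑_k(μ_k−m)² − β(h+∑_k λ_k)} ∏_i (∑_k q_k λ_k^{1/2} exp{−(λ_k/2)(y_i−μ_k)²})`. -/
noncomputable def mixturePosterior (K n : ℕ) (y : Fin n → ℝ) (α g hc κ m : ℝ)
    (μ lam q : Fin K → ℝ) (β : ℝ) : ℝ :=
  β ^ ((K : ℝ) * α + g - 1) * (∏ k, lam k) ^ (α - 1) *
    Real.exp (-(κ / 2) * ∑ k, (μ k - m) ^ 2 - β * (hc + ∑ k, lam k)) *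
    ∏ i, ∑ k, q k * lam k ^ ((1 : ℝ) / 2) * Real.exp (-(lam k / 2) * (y i - μ k) ^ 2)

/-- Lower bound for the likelihood factor of an observation `x` along the curve: a constant independent of `t`, times
`t^{1/2}` when `x` is the collapsing mean `a`. -/
lemma likelihood_factor_lower {K : ℕ} (k₀ k₁ : Fin K) (hne : k₁ ≠ k₀) (a m x t : ℝ)
    (ht : 0 < t) :
    (1 / (K : ℝ) * Real.exp (-(1 / 2) * (x - m) ^ 2)) *
        (if x = a then t ^ ((1 : ℝ) / 2) else 1) ≤
      ∑ k : Fin K, 1 / (K : ℝ) * (if k = k₀ then t else 1) ^ ((1 : ℝ) / 2) *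
        Real.exp (-((if k = k₀ then t else 1) / 2) * (x - if k = k₀ then a else m) ^ 2) := by
  have hnn : ∀ k ∈ (univ : Finset (Fin K)),
      0 ≤ 1 / (K : ℝ) * (if k = k₀ then t else 1) ^ ((1 : ℝ) / 2) *
        Real.exp (-((if k = k₀ then t else 1) / 2) * (x - if k = k₀ then a else m) ^ 2) := by
    intro k _
    have : 0 < (if k = k₀ then t else 1) := by split_ifs <;> linarith
    positivity
  by_cases hx : x = a
  · refine le_trans ?_ (Finset.single_le_sum hnn (mem_univ k₀))
    have h1 : Real.exp (-(1 / 2) * (x - m) ^ 2) ≤ 1 :=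
      Real.exp_le_one_iff.2 (by nlinarith [sq_nonneg (x - m)])
    have h2 : 0 ≤ 1 / (K : ℝ) * t ^ ((1 : ℝ) / 2) := by positivity
    simp only [hx, if_true, sub_self]
    rw [hx] at h1
    simp only [ne_eq, OfNat.ofNat_ne_zero, not_false_eq_true, zero_pow, mul_zero, Real.exp_zero,
      mul_one]
    nlinarith [mul_le_mul_of_nonneg_left h1 h2]
  · refine le_trans ?_ (Finset.single_le_sum hnn (mem_univ k₁))
    simp [hx, hne]

lemma prod_ite_eq_rpow_card {n : ℕ} (y : Fin n → ℝ) (j : Fin n) {t : ℝ} (ht : 0 < t) :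
    ∏ i, (if y i = y j then t ^ ((1 : ℝ) / 2) else 1) =
      t ^ ((Nat.card {i : Fin n // y i = y j} : ℝ) / 2) := by
  rw [Finset.prod_ite, Finset.prod_const_one, mul_one, Finset.prod_const, ← Real.rpow_natCast,
    ← Real.rpow_mul ht.le, Nat.card_eq_fintype_card, Fintype.card_subtype]
  ring_nf

/-- if some data value `y_j` occurs with frequency `N_j > 2g + 2(K−1)α`, then
the mixture posterior density is unbounded on its domain
`{λ_k > 0, β > 0, q_k > 0, ∑_k q_k = 1}`. -/
theorem mixturePosterior_unbounded (K n : ℕ) (hK : 2 ≤ K) (y : Fin n → ℝ)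
    (α g hc κ : ℝ) (m : ℝ)
    (hα : 0 < α) (hg : 0 < g) (hhc : 0 < hc) (hκ : 0 < κ)
    (j : Fin n)
    (hfreq : 2 * g + 2 * ((K : ℝ) - 1) * α < (Nat.card {i : Fin n // y i = y j} : ℝ)) :
    ∀ C : ℝ, ∃ (μ lam q : Fin K → ℝ) (β : ℝ),
      (∀ k, 0 < lam k) ∧ 0 < β ∧ (∀ k, 0 < q k) ∧ (∑ k, q k) = 1 ∧
      C < mixturePosterior K n y α g hc κ m μ lam q β := by
  intro C
  have hKpos : (0 : ℝ) < K := by exact_mod_cast (by omega : 0 < K)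
  let k₀ : Fin K := ⟨0, by omega⟩
  let k₁ : Fin K := ⟨1, by omega⟩
  have hne : k₁ ≠ k₀ := by simp [k₀, k₁]
  set N : ℝ := (Nat.card {i : Fin n // y i = y j} : ℝ) with hN
  set e : ℝ := N / 2 - g - ((K : ℝ) - 1) * α with he
  have hepos : 0 < e := by rw [he]; linarith
  set c : Fin n → ℝ := fun i => 1 / (K : ℝ) * Real.exp (-(1 / 2) * (y i - m) ^ 2) with hc_def
  have hcpos : ∀ i, 0 < c i := fun i => by simp only [hc_def]; positivity
  set E : ℝ := Real.exp (-(κ / 2) * (y j - m) ^ 2 - (hc + K)) with hE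
  have hA : 0 < E * ∏ i, c i := mul_pos (Real.exp_pos _) (prod_pos fun i _ => hcpos i)
  obtain ⟨t, htC, ht1⟩ := (((tendsto_rpow_atTop hepos).const_mul_atTop hA).eventually_gt_atTop C
    |>.and (Filter.eventually_ge_atTop (1 : ℝ))).exists
  have ht : 0 < t := by linarith
  refine ⟨fun k => if k = k₀ then y j else m, fun k => if k = k₀ then t else 1,
    fun _ => 1 / (K : ℝ), t⁻¹, ?_, inv_pos.2 ht, fun _ => by positivity, ?_, ?_⟩
  · intro k
    dsimp only
    split_ifs <;> linarith
  · simp [hKpos.ne']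
  refine lt_of_lt_of_le htC ?_
  unfold mixturePosterior
  have hprod : ∏ k : Fin K, (if k = k₀ then t else 1) = t := by simp
  have hmu : ∑ k : Fin K, ((if k = k₀ then y j else m) - m) ^ 2 = (y j - m) ^ 2 := by
    rw [Finset.sum_eq_single k₀]
    · simp
    · intro k _ hk
      simp [hk]
    · simp
  have hlam : ∑ k : Fin K, (if k = k₀ then t else 1) = t + (K - 1) := by
    have : ∀ k : Fin K, (if k = k₀ then t else 1) = 1 + if k = k₀ then t - 1 else 0 := by
      intro k
      split_ifs <;> ring
    simp only [this, Finset.sum_add_distrib]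
    simp
    ring
  rw [hprod, hmu, hlam]
  -- `β (h + ∑ λ) = 1 + (h + K - 1) / t`, which is at most `h + K` once `t ≥ 1`.
  have hexp : E ≤ Real.exp (-(κ / 2) * (y j - m) ^ 2 - t⁻¹ * (hc + (t + (K - 1)))) := by
    apply Real.exp_le_exp.2
    have h1 : t⁻¹ ≤ 1 := inv_le_one_of_one_le₀ ht1
    have h2 : t⁻¹ * t = 1 := inv_mul_cancel₀ ht.ne'
    have h3 : (2 : ℝ) ≤ K := by exact_mod_cast hK
    nlinarith [mul_le_mul_of_nonneg_right h1 (by linarith : 0 ≤ hc + (K - 1))]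
  have hlik := Finset.prod_le_prod (s := univ)
    (f := fun i => c i * (if y i = y j then t ^ ((1 : ℝ) / 2) else 1))
    (fun i _ => mul_nonneg (hcpos i).le (by split_ifs <;> positivity))
    (fun i _ => likelihood_factor_lower k₀ k₁ hne (y j) m (y i) t ht)
  rw [Finset.prod_mul_distrib, prod_ite_eq_rpow_card y j ht, ← hN] at hlik
  have hpow : t⁻¹ ^ ((K : ℝ) * α + g - 1) * t ^ (α - 1) * t ^ (N / 2) = t ^ e := by
    rw [Real.inv_rpow ht.le, ← Real.rpow_neg ht.le, ← Real.rpow_add ht, ← Real.rpow_add ht, he]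
    ring_nf
  have hcp : 0 < ∏ i, c i := prod_pos fun i _ => hcpos i
  calc E * (∏ i, c i) * t ^ e
      = t⁻¹ ^ ((K : ℝ) * α + g - 1) * t ^ (α - 1) * E * ((∏ i, c i) * t ^ (N / 2)) := by
        rw [← hpow]
        ring
    _ ≤ _ := by gcongr
end

section
/- With the mixture posterior density p as above and K ≥ 2, fix j with y_j among the data, set μ₁ = y_j, fix μ₂,…,μ_K ∈ ℝ distinct from y_j as desired, fix λ₂,…,λ_K > 0, fix weights q₁,…,q_K > 0 summing to 1 with 0 < q₁ < 1, and set β = λ₁^{−1}. Then, as λ₁ → ∞, log p(θ) − (N_j/2 + (1−K)α − g) log λ₁ converges to a finite limit; in particular log p(θ) → +∞ whenever N_j/2 + (1−K)α − g > 0. -/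
/-!
Along the path `λ₁ = t`, `β = t⁻¹`, every factor of the posterior is positive, so `log p` is a sum
of logarithms. The prior powers contribute `((1 - K) α - g) log t` plus a constant, and the
exponential prior factor contributes `-t⁻¹ (h + t + const)`, which converges. The `i`-th likelihood
factor is `q₁ t^{1/2} exp(-(t/2)(y_i - y_j)²) + C_i`, where `C_i > 0` collects the components
`k ≥ 2` and does not depend on `t`. If `y_i = y_j` its logarithm is `(1/2) log t + O(1)` with a
limit for the remainder; otherwise the Gaussian factor kills the first term and the logarithm tends
to `log C_i` (this is where `K ≥ 2` enters). Summing over `i` gives `(N_j / 2) log t`.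
-/

open MeasureTheory Finset Filter

/-- The logarithm of a likelihood factor, with `d` the offset of the data point from the collapsing
component and `C` the contribution of the other components: it grows like `(1/2) log t` when
`d = 0`, and converges otherwise. -/
lemma tendsto_log_likelihood_factor (a C d : ℝ) (ha : 0 < a) (hC : 0 < C) :
    ∃ ℓ : ℝ, Tendsto (fun t : ℝ =>
      Real.log (a * t ^ ((1 : ℝ) / 2) * Real.exp (-(t / 2) * d ^ 2) + C) -
        (if d = 0 then (1 : ℝ) / 2 else 0) * Real.log t) atTop (nhds ℓ) := by
  by_cases hd : d = 0
  · -- Dividing by `t ^ (1/2)` leaves `a + C t ^ (-1/2)`, which tends to `a`.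
    refine ⟨Real.log a, ?_⟩
    have h1 : Tendsto (fun t : ℝ => a + C * t ^ (-((1 : ℝ) / 2))) atTop (nhds a) := by
      simpa using ((tendsto_rpow_neg_atTop (y := (1 : ℝ) / 2) (by norm_num)).const_mul C).const_add a
    refine (h1.log ha.ne').congr' ?_
    filter_upwards [eventually_gt_atTop 0] with t ht
    have hp : 0 < t ^ ((1 : ℝ) / 2) := Real.rpow_pos_of_pos ht _
    have hn : 0 < t ^ (-((1 : ℝ) / 2)) := Real.rpow_pos_of_pos ht _
    have hpn : t ^ ((1 : ℝ) / 2) * t ^ (-((1 : ℝ) / 2)) = 1 := by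
      rw [← Real.rpow_add ht]; simp
    have hfac : a * t ^ ((1 : ℝ) / 2) * Real.exp (-(t / 2) * d ^ 2) + C =
        (a + C * t ^ (-((1 : ℝ) / 2))) * t ^ ((1 : ℝ) / 2) := by
      simp only [hd, ne_eq, OfNat.ofNat_ne_zero, not_false_eq_true, zero_pow, mul_zero,
        Real.exp_zero, mul_one]
      linear_combination (-C) * hpn
    rw [hfac, Real.log_mul (by positivity) hp.ne', Real.log_rpow ht, if_pos hd]
    ring
  · refine ⟨Real.log C, ?_⟩
    have hd2 : 0 < d ^ 2 / 2 := by positivity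
    have h1 : Tendsto (fun t : ℝ => a * (t ^ ((1 : ℝ) / 2) * Real.exp (-(d ^ 2 / 2) * t)) + C)
        atTop (nhds C) := by
      simpa using ((tendsto_rpow_mul_exp_neg_mul_atTop_nhds_zero ((1 : ℝ) / 2) _ hd2).const_mul
        a).add_const C
    refine (h1.log hC.ne').congr fun t => ?_
    rw [if_neg hd, zero_mul, sub_zero]
    congr 2
    rw [mul_assoc]
    congr 3
    ring

/-- fix `μ₁ = y_j`, `μ₂,…,μ_K ≠ y_j`, `λ₂,…,λ_K > 0`, positive weights summing
to one with `q₁ < 1`, and set `β = λ₁⁻¹`. Then as `λ₁ → ∞`,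
`log p(θ) − (N_j/2 + (1−K)α − g) log λ₁` converges to a finite limit; in particular
`log p(θ) → +∞` whenever `N_j/2 + (1−K)α − g > 0`. -/
theorem mixturePosterior_log_asymptotics (K n : ℕ) [NeZero K] (hK : 2 ≤ K) (y : Fin n → ℝ)
    (α g hc κ : ℝ) (m : ℝ)
    (hα : 0 < α) (hg : 0 < g) (hhc : 0 < hc) (hκ : 0 < κ)
    (j : Fin n) (μ lam q : Fin K → ℝ)
    (hμ0 : μ 0 = y j) (hμk : ∀ k : Fin K, k ≠ 0 → μ k ≠ y j)
    (hlam : ∀ k : Fin K, k ≠ 0 → 0 < lam k)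
    (hq : ∀ k, 0 < q k) (hqsum : (∑ k, q k) = 1) (hq0 : q 0 < 1) :
    (∃ ℓ : ℝ, Tendsto
        (fun t : ℝ =>
          Real.log (mixturePosterior K n y α g hc κ m μ (Function.update lam 0 t) q t⁻¹) -
            ((Nat.card {i : Fin n // y i = y j} : ℝ) / 2 + (1 - (K : ℝ)) * α - g) *
              Real.log t)
        atTop (nhds ℓ)) ∧
    ((Nat.card {i : Fin n // y i = y j} : ℝ) / 2 + (1 - (K : ℝ)) * α - g > 0 →
      Tendsto
        (fun t : ℝ =>
          Real.log (mixturePosterior K n y α g hc κ m μ (Function.update lam 0 t) q t⁻¹))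
        atTop atTop) := by
  classical
  set N : ℝ := (Nat.card {i : Fin n // y i = y j} : ℝ) with hN
  set C : Fin n → ℝ := fun i => ∑ k ∈ univ.erase (0 : Fin K),
    q k * lam k ^ ((1 : ℝ) / 2) * Real.exp (-(lam k / 2) * (y i - μ k) ^ 2) with hCdef
  have hC : ∀ i, 0 < C i := by
    intro i
    -- `K ≥ 2` provides a component other than the collapsing one.
    refine Finset.sum_pos (fun k hk => ?_) ⟨⟨1, by omega⟩, ?_⟩
    · have h1 := hq k
      have h2 := Real.rpow_pos_of_pos (hlam k (Finset.ne_of_mem_erase hk)) ((1 : ℝ) / 2)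
      positivity
    · refine Finset.mem_erase.mpr ⟨fun h => ?_, Finset.mem_univ _⟩
      simpa using congrArg Fin.val h
  set P : ℝ := ∏ k ∈ univ.erase (0 : Fin K), lam k with hPdef
  have hP : 0 < P := Finset.prod_pos fun k hk => hlam k (Finset.ne_of_mem_erase hk)
  set S : ℝ := ∑ k ∈ univ.erase (0 : Fin K), lam k with hSdef
  set E : ℝ := -(κ / 2) * ∑ k, (μ k - m) ^ 2 with hEdef
  have hupd : ∀ (t : ℝ) (k : Fin K), k ∈ univ.erase (0 : Fin K) →
      Function.update lam 0 t k = lam k := fun t k hk =>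
    Function.update_of_ne (Finset.ne_of_mem_erase hk) _ _
  have hprod : ∀ t : ℝ, ∏ k, Function.update lam 0 t k = t * P := fun t => by
    rw [← Finset.mul_prod_erase univ _ (Finset.mem_univ (0 : Fin K)), Function.update_self,
      Finset.prod_congr rfl (hupd t)]
  have hsum : ∀ t : ℝ, ∑ k, Function.update lam 0 t k = t + S := fun t => by
    rw [← Finset.add_sum_erase univ _ (Finset.mem_univ (0 : Fin K)), Function.update_self,
      Finset.sum_congr rfl (hupd t)]
  have hlik : ∀ (t : ℝ) (i : Fin n), ∑ k, q k * Function.update lam 0 t k ^ ((1 : ℝ) / 2) *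
      Real.exp (-(Function.update lam 0 t k / 2) * (y i - μ k) ^ 2) =
      q 0 * t ^ ((1 : ℝ) / 2) * Real.exp (-(t / 2) * (y i - y j) ^ 2) + C i := fun t i => by
    rw [← Finset.add_sum_erase univ _ (Finset.mem_univ (0 : Fin K)), Function.update_self, hμ0]
    congr 1
    exact Finset.sum_congr rfl fun k hk => by rw [hupd t k hk]
  choose L hL using fun i => tendsto_log_likelihood_factor (q 0) (C i) (y i - y j) (hq 0) (hC i)
  have hcount : ∑ i, (if y i - y j = 0 then (1 : ℝ) / 2 else 0) = N / 2 := by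
    simp only [sub_eq_zero]
    rw [← Finset.sum_filter, Finset.sum_const, nsmul_eq_mul, hN, Nat.card_eq_fintype_card,
      Fintype.card_subtype]
    ring
  have hexp : Tendsto (fun t : ℝ => t⁻¹ * (hc + S) + 1) atTop (nhds 1) := by
    simpa using (tendsto_inv_atTop_zero.mul_const (hc + S)).add_const (1 : ℝ)
  have hlim : Tendsto (fun t : ℝ =>
      Real.log (mixturePosterior K n y α g hc κ m μ (Function.update lam 0 t) q t⁻¹) -
        (N / 2 + (1 - (K : ℝ)) * α - g) * Real.log t) atTop
      (nhds ((α - 1) * Real.log P + (E - 1) + ∑ i, L i)) := by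
    refine (((hexp.const_sub E).const_add ((α - 1) * Real.log P)).add
      (tendsto_finsetSum univ fun i _ => hL i)).congr' ?_
    filter_upwards [eventually_gt_atTop 0] with t ht
    have hF : ∀ i, 0 < q 0 * t ^ ((1 : ℝ) / 2) * Real.exp (-(t / 2) * (y i - y j) ^ 2) + C i := by
      intro i
      have h1 := hq 0
      have h2 := hC i
      positivity
    unfold mixturePosterior
    rw [hprod, hsum]
    simp only [hlik]
    rw [Real.log_mul (by positivity) (Finset.prod_pos fun i _ => hF i).ne',
      Real.log_mul (by positivity) (Real.exp_pos _).ne',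
      Real.log_mul (by positivity) (by positivity), Real.log_exp,
      Real.log_rpow (by positivity), Real.log_rpow (by positivity), Real.log_inv,
      Real.log_mul ht.ne' hP.ne', Real.log_prod (fun i _ => (hF i).ne'),
      Finset.sum_sub_distrib, ← Finset.sum_mul, hcount, ← hEdef]
    have htt : t⁻¹ * t = 1 := inv_mul_cancel₀ ht.ne'
    linear_combination htt
  refine ⟨⟨_, hlim⟩, fun hpos => ?_⟩
  refine (hlim.add_atTop (Real.tendsto_log_atTop.const_mul_atTop hpos)).congr fun t => ?_
  ring
end

section
/- There exists an open set O ⊂ ℝ^{L×L} containing every irreducible stochastic L×L matrix, and a continuously differentiable map w̃ : O → ℝ^L, such that for every irreducible stochastic matrix F, w̃(F) is the unique probability vector w satisfying w^⊤ F = w^⊤. In particular, the map assigning to an irreducible stochastic matrix its stationary probability vector is differentiable. -/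
/-!
For a matrix `F` put `G(F) = 1 - F + J`, where `J` is the all-ones matrix. If `F` is stochastic and
irreducible then `G(F)` is invertible: if `G(F) y = 0`, comparing at a maximum and at a minimum of
`y` gives `∑ y = 0`, so `F y = y`, and by the maximum principle and irreducibility `y` is constant,
hence zero (`bordered_det_ne_zero`).

Every stationary vector `v` of total mass one solves `vᵀ G(F) = 1ᵀ`. Conversely, as
`G(F) 1 = L • 1`, the unique solution has total mass one and is stationary. It is nonnegative
because `|w|` is again stationary, so its normalization equals `w`. Cramer's rule expresses the
solution as a quotient of polynomials in the entries of `F`, smooth on the open set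
`{det G(F) ≠ 0}`.
-/

open Finset

/-- A matrix (as an element of `ℝ^{L×L}`) is stochastic: nonnegative entries, rows sum to 1. -/
def IsStochastic {L : ℕ} (F : Fin L → Fin L → ℝ) : Prop :=
  (∀ i j, 0 ≤ F i j) ∧ ∀ i, ∑ j, F i j = 1

/-- The matrix `1 - F + J`, where `J` is the all-ones matrix. -/
def bordered {L : ℕ} (F : Fin L → Fin L → ℝ) : Matrix (Fin L) (Fin L) ℝ :=
  fun i j => (1 : Matrix (Fin L) (Fin L) ℝ) i j - F i j + 1

/-- The solution `w` of `wᵀ (1 - F + J) = 1ᵀ` given by Cramer's rule; it is `0` where the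
determinant vanishes. -/
noncomputable def stationaryVec {L : ℕ} (F : Fin L → Fin L → ℝ) : Fin L → ℝ :=
  fun i => (bordered F).transpose.cramer (fun _ => 1) i / (bordered F).det

lemma bordered_mulVec {L : ℕ} (F : Fin L → Fin L → ℝ) (y : Fin L → ℝ) (i : Fin L) :
    (bordered F).mulVec y i = y i - ∑ j, F i j * y j + ∑ j, y j := by
  simp [bordered, Matrix.mulVec, dotProduct, add_mul, sub_mul, Finset.sum_add_distrib,
    Finset.sum_sub_distrib, Matrix.one_apply]

lemma bordered_vecMul {L : ℕ} (F : Fin L → Fin L → ℝ) (v : Fin L → ℝ) (j : Fin L) :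
    Matrix.vecMul v (bordered F) j = v j - ∑ i, v i * F i j + ∑ i, v i := by
  simp [bordered, Matrix.vecMul, dotProduct, mul_add, mul_sub, Finset.sum_add_distrib,
    Finset.sum_sub_distrib, Matrix.one_apply]

lemma contDiff_det_comp {L : ℕ} {M : (Fin L → Fin L → ℝ) → Matrix (Fin L) (Fin L) ℝ}
    (h : ∀ i j, ContDiff ℝ 1 (fun F => M F i j)) : ContDiff ℝ 1 (fun F => (M F).det) := by
  simp only [Matrix.det_apply']
  exact ContDiff.sum fun σ _ => contDiff_const.mul (contDiff_prod fun i _ => h _ _)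

lemma contDiff_bordered {L : ℕ} (i j : Fin L) :
    ContDiff ℝ 1 (fun F : Fin L → Fin L → ℝ => bordered F i j) := by
  unfold bordered
  fun_prop

/-- Maximum principle: at a maximum `a` of `y` one has `(F y) a ≤ y a`. -/
lemma sum_mul_le_max {L : ℕ} {F : Fin L → Fin L → ℝ} (hF : IsStochastic F) {y : Fin L → ℝ}
    {a : Fin L} (ha : ∀ j, y j ≤ y a) : ∑ j, F a j * y j ≤ y a := by
  calc ∑ j, F a j * y j ≤ ∑ j, F a j * y a :=
        Finset.sum_le_sum fun j _ => mul_le_mul_of_nonneg_left (ha j) (hF.1 a j)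
    _ = y a := by rw [← Finset.sum_mul, hF.2 a, one_mul]

/-- Harmonic vectors of an irreducible stochastic matrix are constant: the set where the maximum is
attained cannot be left with positive probability. -/
lemma harmonic_eq_max {L : ℕ} {F : Fin L → Fin L → ℝ} (hF : IsStochastic F)
    (hI : MatIrreducible F) {y : Fin L → ℝ} (hy : ∀ i, ∑ j, F i j * y j = y i)
    {a : Fin L} (ha : ∀ j, y j ≤ y a) (k : Fin L) : y k = y a := by
  by_contra hk
  obtain ⟨i, hi, j, hj, hpos⟩ := hI (Finset.univ.filter fun i => y i ≠ y a) ⟨k, by simpa using hk⟩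
    (fun h => by
      have := Finset.mem_univ a
      rw [← h] at this
      simp at this)
  simp only [Finset.mem_filter, Finset.mem_univ, true_and, not_not] at hi hj
  have hlt : ∑ l, F j l * y l < ∑ l, F j l * y a :=
    Finset.sum_lt_sum (fun l _ => mul_le_mul_of_nonneg_left (ha l) (hF.1 j l))
      ⟨i, Finset.mem_univ i, mul_lt_mul_of_pos_left (lt_of_le_of_ne (ha i) hi) hpos⟩
  rw [hy j, ← Finset.sum_mul, hF.2 j, one_mul, hj] at hlt
  exact lt_irrefl _ hlt

lemma bordered_det_ne_zero {L : ℕ} (hL : 0 < L) {F : Fin L → Fin L → ℝ} (hF : IsStochastic F)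
    (hI : MatIrreducible F) : (bordered F).det ≠ 0 := by
  intro hdet
  obtain ⟨y, hy0, hy⟩ := Matrix.exists_mulVec_eq_zero_iff.mpr hdet
  have : Nonempty (Fin L) := ⟨⟨0, hL⟩⟩
  have hy' : ∀ i, y i - ∑ j, F i j * y j + ∑ j, y j = 0 := fun i => by
    rw [← bordered_mulVec, hy]; rfl
  obtain ⟨a, ha⟩ := Finite.exists_max y
  obtain ⟨b, hb⟩ := Finite.exists_min y
  have h1 := sum_mul_le_max hF ha
  -- the bound at the minimum `b` is the maximum principle for `-y`
  have h2 := sum_mul_le_max (y := fun i => -y i) hF (a := b) (fun j => neg_le_neg (hb j))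
  simp only [mul_neg, Finset.sum_neg_distrib] at h2
  have hs : ∑ j, y j = 0 := by
    linarith [hy' a, hy' b]
  have hc := harmonic_eq_max hF hI (fun i => by linarith [hy' i]) ha
  have hz : (L : ℝ) * y a = 0 := by
    rw [← hs, Finset.sum_congr rfl fun j _ => hc j]
    simp
  have hLr : (L : ℝ) ≠ 0 := by exact_mod_cast hL.ne'
  apply hy0
  funext k
  rw [hc k]
  simpa [hLr] using hz

lemma stationaryVec_vecMul {L : ℕ} {F : Fin L → Fin L → ℝ} (hd : (bordered F).det ≠ 0) :
    Matrix.vecMul (stationaryVec F) (bordered F) = fun _ => 1 := by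
  have h := Matrix.mulVec_cramer (bordered F).transpose (fun _ => 1)
  have he : stationaryVec F
      = (bordered F).det⁻¹ • (bordered F).transpose.cramer (fun _ => 1) := by
    funext i
    simp [stationaryVec, div_eq_inv_mul]
  rw [he, Matrix.smul_vecMul, ← Matrix.mulVec_transpose, h, Matrix.det_transpose, smul_smul,
    inv_mul_cancel₀ hd, one_smul]

/-- Since `(1 - F + J) 1 = L • 1`, the Cramer solution has total mass one. -/
lemma stationaryVec_sum {L : ℕ} (hL : 0 < L) {F : Fin L → Fin L → ℝ} (hF : IsStochastic F)
    (hd : (bordered F).det ≠ 0) : ∑ i, stationaryVec F i = 1 := by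
  have h : ∑ j, Matrix.vecMul (stationaryVec F) (bordered F) j = L := by
    rw [stationaryVec_vecMul hd]; simp
  simp only [bordered_vecMul, Finset.sum_add_distrib, Finset.sum_sub_distrib] at h
  rw [Finset.sum_comm] at h
  simp only [← Finset.mul_sum, hF.2, mul_one, sub_self, zero_add, Finset.sum_const,
    Finset.card_univ, Fintype.card_fin, nsmul_eq_mul] at h
  have hLr : (L : ℝ) ≠ 0 := by exact_mod_cast hL.ne'
  exact mul_left_cancel₀ hLr (by rw [h, mul_one])

lemma eq_stationaryVec {L : ℕ} {F : Fin L → Fin L → ℝ} (hd : (bordered F).det ≠ 0)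
    {v : Fin L → ℝ} (hs : ∑ i, v i = 1) (hv : ∀ j, ∑ i, v i * F i j = v j) :
    v = stationaryVec F := by
  have h : Matrix.vecMul v (bordered F) = Matrix.vecMul (stationaryVec F) (bordered F) := by
    rw [stationaryVec_vecMul hd]
    funext j
    rw [bordered_vecMul, hs, hv]
    simp
  exact Matrix.vecMul_injective_of_isUnit
    ((Matrix.isUnit_iff_isUnit_det _).mpr (isUnit_iff_ne_zero.mpr hd)) h

/-- The triangle inequality gives `|v| ≤ |v| F` entrywise, and both sides have the same sum. -/
lemma abs_stationary {L : ℕ} {F : Fin L → Fin L → ℝ} (hF : IsStochastic F) {v : Fin L → ℝ}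
    (hv : ∀ j, ∑ i, v i * F i j = v j) (j : Fin L) : ∑ i, |v i| * F i j = |v j| := by
  have hle : ∀ j ∈ Finset.univ, |v j| ≤ ∑ i, |v i| * F i j := fun j _ => by
    conv_lhs => rw [← hv j]
    refine (Finset.abs_sum_le_sum_abs _ _).trans_eq (Finset.sum_congr rfl fun i _ => ?_)
    rw [abs_mul, abs_of_nonneg (hF.1 i j)]
  have hsum : ∑ j, |v j| = ∑ j, ∑ i, |v i| * F i j := by
    rw [Finset.sum_comm]
    simp only [← Finset.mul_sum, hF.2, mul_one]
  exact ((Finset.sum_eq_sum_iff_of_le hle).mp hsum j (Finset.mem_univ j)).symm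

/-- there is an open set `O ⊂ ℝ^{L×L}` containing every irreducible stochastic
matrix and a continuously differentiable map `w̃ : O → ℝ^L` such that for every irreducible
stochastic `F`, `w̃(F)` is the unique probability vector `w` with `wᵀF = wᵀ`. -/
theorem stationary_vector_differentiable (L : ℕ) (hL : 0 < L) :
    ∃ (O : Set (Fin L → Fin L → ℝ)) (w : (Fin L → Fin L → ℝ) → Fin L → ℝ),
      IsOpen O ∧ ContDiffOn ℝ 1 w O ∧
      ∀ F : Fin L → Fin L → ℝ, IsStochastic F → MatIrreducible F →
        F ∈ O ∧
        (∀ i, 0 ≤ w F i) ∧ (∑ i, w F i = 1) ∧ (∀ j, ∑ i, w F i * F i j = w F j) ∧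
        ∀ v : Fin L → ℝ, (∀ i, 0 ≤ v i) → (∑ i, v i = 1) →
          (∀ j, ∑ i, v i * F i j = v j) → v = w F := by
  refine ⟨{F | (bordered F).det ≠ 0}, stationaryVec, ?_, ?_, ?_⟩
  · exact isOpen_ne_fun (contDiff_det_comp contDiff_bordered).continuous continuous_const
  · rw [contDiffOn_pi]
    intro i
    refine ContDiffOn.div ?_ (contDiff_det_comp contDiff_bordered).contDiffOn fun F hF => hF
    simp only [Matrix.cramer_apply]
    refine (contDiff_det_comp fun a b => ?_).contDiffOn
    simp only [Matrix.updateCol_apply, Matrix.transpose_apply]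
    split_ifs
    · exact contDiff_const
    · exact contDiff_bordered b a
  · intro F hF hI
    have hd := bordered_det_ne_zero hL hF hI
    have hs := stationaryVec_sum hL hF hd
    have hst : ∀ j, ∑ i, stationaryVec F i * F i j = stationaryVec F j := fun j => by
      have h := bordered_vecMul F (stationaryVec F) j
      rw [stationaryVec_vecMul hd, hs] at h
      linarith
    refine ⟨hd, ?_, hs, hst, fun v _ hv1 hv2 => eq_stationaryVec hd hv1 hv2⟩
    have hc : 0 < ∑ i, |stationaryVec F i| :=
      lt_of_lt_of_le (by rw [hs]; exact one_pos)
        (Finset.sum_le_sum fun i _ => le_abs_self (stationaryVec F i))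
    have h := eq_stationaryVec (v := fun j => |stationaryVec F j| / ∑ i, |stationaryVec F i|) hd
      (by rw [← Finset.sum_div, div_self hc.ne'])
      (fun j => by
        rw [← abs_stationary hF hst j, Finset.sum_div]
        exact Finset.sum_congr rfl fun i _ => by ring)
    intro i
    rw [← congrFun h i]
    positivity
end
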